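/- For an integral modular datum, the fusion symbol f: (Z/N)^× → Q_N^× defined by f(q) = σ_q(g)/g satisfies the 1-cocycle identity f(qq') = f(q)·σ_q(f(q')), and f is a Dirichlet character (i.e. multiplicative) if and only if g' = ±g; in that case f(q) ∈ {1,-1} for all q coprime to N. -/

import Mathlib

open Finset

/-- A modular datum over a field `K` of characteristic zero: a finite index set `I` with a
distinguished element `o`, an involution `star` fixing `o`, a symmetric Verlinde matrix `S`
with nonzero first column, a diagonal Dehn matrix with entries `T i` of finite order
satisfying `T (star i) = T i`, such that `S² = n·C` for a nonzero global dimension `n`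
(where `C = (δ_{i,j*})`), the matrices `T⁻¹ST⁻¹` and `STS` are proportional, and the
Verlinde numbers `N_{ij}^k` are nonnegative integers. -/
structure ModularDatum (K : Type*) [Field K] [CharZero K]
    (I : Type*) [Fintype I] [DecidableEq I] where
  o : I
  star : I → I
  S : Matrix I I K
  T : I → K
  n : K
  star_involutive : Function.Involutive star
  star_o : star o = o
  S_symm : ∀ i j, S i j = S j i
  S_io_ne : ∀ i, S i o ≠ 0
  T_star : ∀ i, T (star i) = T i
  T_order : ∃ N : ℕ, 0 < N ∧ ∀ i, T i ^ N = 1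
  n_ne : n ≠ 0
  S_sq : ∀ i k, (∑ j, S i j * S j k) = n * (if i = star k then 1 else 0)
  proportional : ∃ c : K, ∀ i j,
    (T i)⁻¹ * S i j * (T j)⁻¹ = c * ∑ k, S i k * T k * S k j
  verlinde : ∀ i j k, ∃ m : ℕ,
    (1 / n) * ∑ l, S i l * S j l * S (star k) l / S o l = (m : K)

namespace ModularDatum

variable {K : Type*} [Field K] [CharZero K] {I : Type*} [Fintype I] [DecidableEq I]
variable (d : ModularDatum K I)

/-- The `i`-th dimension `n_i = s_{io}`. -/
def ni (i : I) : K := d.S i d.o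

/-- The Gaussian sum `g = Σ_i n_i² t_i`. -/
def gauss : K := ∑ i, d.ni i ^ 2 * d.T i

/-- The reciprocal Gaussian sum `g' = Σ_i n_i² / t_i`. -/
def gauss' : K := ∑ i, d.ni i ^ 2 * (d.T i)⁻¹

/-- The Verlinde numbers `N_{ij}^k = (1/n) Σ_l s_{il} s_{jl} s_{k*l} / s_{ol}`. -/
def Nc (i j k : I) : K := (1 / d.n) * ∑ l, d.S i l * d.S j l * d.S (d.star k) l / d.S d.o l

end ModularDatum

namespace ModularDatum

variable {K : Type*} [Field K] [CharZero K] {I : Type*} [Fintype I] [DecidableEq I]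

/-- The Galois twist `σ_q(g) = Σ_i n_i² t_i^q` of the Gaussian sum. -/
def gaussTw (d : ModularDatum K I) (q : ℕ) : K := ∑ i, d.ni i ^ 2 * d.T i ^ q

/-- The fusion symbol `f(q) = σ_q(g)/g`. -/
def fsym (d : ModularDatum K I) (q : ℕ) : K := d.gaussTw q / d.gauss

end ModularDatum

/-!
Let `A ⊆ K` be the `ℚ`-algebra generated by the `N`-th roots of unity of `K`. These form a cyclic
group of some order `M ∣ N`, so `A` is the `M`-th cyclotomic field. For `q` coprime to `N` it has
an automorphism `σ_q` raising these roots to the `q`-th power, and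
`σ_q (gaussTw r) = gaussTw (q * r)` as soon as the squares `n_i²` are rational. The modular
relation gives `g g' = n n_o²`, which is then a rational number, and shows that `g ≠ 0`.
If `g' = ±g`, then `g²` is rational, hence fixed by all `σ_q`, so that `σ_q g = ±g`. Conversely
`f(-1) = g'/g` and `f((-1)²) = 1`, so a multiplicative `f` forces `g'² = g²`.
-/

section Cyclotomic

open Polynomial

theorem exists_algEquiv_apply_eq_pow {F B : Type*} [Field F] [CommRing B] [IsDomain B]
    [Algebra F B] {N : ℕ} [NeZero N] [IsCyclotomicExtension {N} F B]
    (hirr : Irreducible (cyclotomic N F)) {q : ℕ} (hq : q.Coprime N) :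
    ∃ σ : B ≃ₐ[F] B, ∀ x : B, x ^ N = 1 → σ x = x ^ q := by
  have hζ := IsCyclotomicExtension.zeta_spec N F B
  have hζq := hζ.pow_of_coprime q hq
  refine ⟨IsCyclotomicExtension.fromZetaAut hζq hirr, fun x hx ↦ ?_⟩
  obtain ⟨k, -, rfl⟩ := hζ.eq_pow_of_pow_eq_one hx
  rw [map_pow, IsCyclotomicExtension.fromZetaAut_spec hζq hirr, pow_right_comm]

theorem exists_isPrimitiveRoot_forall_pow_eq_one_iff (R : Type*) [CommRing R] [IsDomain R]
    (N : ℕ) [NeZero N] :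
    ∃ M, M ∣ N ∧ ∃ ζ : R, IsPrimitiveRoot ζ M ∧ ∀ x : R, x ^ N = 1 ↔ x ^ M = 1 := by
  obtain ⟨u, hu⟩ := IsCyclic.exists_generator (α := rootsOfUnity N R)
  have huN : orderOf u ∣ N := orderOf_dvd_of_pow_eq_one (Subtype.ext u.2)
  refine ⟨orderOf u, huN, (u : Rˣ), ?_, fun x ↦ ⟨fun hx ↦ ?_, fun hx ↦ ?_⟩⟩
  · exact IsPrimitiveRoot.coe_units_iff.2
      (IsPrimitiveRoot.coe_submonoidClass_iff.2 (IsPrimitiveRoot.orderOf u))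
  · have := orderOf_dvd_iff_pow_eq_one.1
      (orderOf_dvd_of_mem_zpowers (hu (rootsOfUnity.mkOfPowEq x hx)))
    simpa using congrArg (fun v : rootsOfUnity N R ↦ ((v : Rˣ) : R)) this
  · obtain ⟨k, hk⟩ := huN
    rw [hk, pow_mul, hx, one_pow]

/-- The `ℚ`-algebra generated by the `N`-th roots of unity of `K`; it plays the role of the
cyclotomic field `Q_N`, but `K` need not contain a primitive `N`-th root of unity. -/
def cyclotomicSubalgebra (K : Type*) [Field K] [CharZero K] (N : ℕ) : Subalgebra ℚ K :=
  Algebra.adjoin ℚ {x : K | x ^ N = 1}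

theorem mem_cyclotomicSubalgebra_of_pow_eq_one {K : Type*} [Field K] [CharZero K] {N : ℕ} {x : K}
    (hx : x ^ N = 1) : x ∈ cyclotomicSubalgebra K N :=
  Algebra.subset_adjoin hx

theorem exists_algEquiv_cyclotomicSubalgebra_apply_eq_pow (K : Type*) [Field K] [CharZero K]
    {N : ℕ} [NeZero N] {q : ℕ} (hq : q.Coprime N) :
    ∃ σ : cyclotomicSubalgebra K N ≃ₐ[ℚ] cyclotomicSubalgebra K N,
      ∀ x, x ^ N = 1 → σ x = x ^ q := by
  obtain ⟨M, hMN, ζ, hζ, hM⟩ := exists_isPrimitiveRoot_forall_pow_eq_one_iff K N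
  have : NeZero M := ⟨ne_zero_of_dvd_ne_zero (NeZero.ne N) hMN⟩
  have hroots : {x : K | x ^ N = 1} = {x : K | ∃ n ∈ ({M} : Set ℕ), n ≠ 0 ∧ x ^ n = 1} := by
    simp [hM, NeZero.ne M]
  have : IsCyclotomicExtension {M} ℚ (cyclotomicSubalgebra K N) := by
    rw [cyclotomicSubalgebra, hroots]
    refine Algebra.isCyclotomicExtension_adjoin_of_exists_isPrimitiveRoot _ _ _ ?_
    rintro _ rfl -
    exact ⟨ζ, hζ⟩
  obtain ⟨σ, hσ⟩ := exists_algEquiv_apply_eq_pow (B := cyclotomicSubalgebra K N)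
    (cyclotomic.irreducible_rat (NeZero.pos M)) (hq.coprime_dvd_right hMN)
  refine ⟨σ, fun x hx ↦ hσ x (Subtype.ext ?_)⟩
  simpa using (hM x).1 (by simpa using congrArg Subtype.val hx)

end Cyclotomic

namespace ModularDatum

variable {K : Type*} [Field K] [CharZero K] {I : Type*} [Fintype I] [DecidableEq I]
variable (d : ModularDatum K I)

section ModularRelation

theorem T_ne_zero (i : I) : d.T i ≠ 0 := by
  obtain ⟨N, hN, hT⟩ := d.T_order
  exact (IsUnit.of_pow_eq_one (hT i) hN.ne').ne_zero

theorem S_o_eq_ni (i : I) : d.S d.o i = d.ni i :=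
  d.S_symm d.o i

theorem sum_S_mul_ni (k : I) : ∑ j, d.S k j * d.ni j = if k = d.o then d.n else 0 := by
  simp only [ni, d.S_sq, d.star_o, mul_ite, mul_one, mul_zero]

theorem n_eq_sum_ni_sq : d.n = ∑ i, d.ni i ^ 2 := by
  simpa only [S_o_eq_ni, ← sq, if_true] using (d.sum_S_mul_ni d.o).symm

theorem exists_ni_mul_T_inv_eq :
    ∃ c : K, ∀ j, d.ni j * (d.T j)⁻¹ = c * ∑ k, d.ni k * d.T k * d.S k j := by
  obtain ⟨c, hc⟩ := d.proportional
  refine ⟨d.T d.o * c, fun j ↦ ?_⟩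
  have hrow := hc d.o j
  simp only [S_o_eq_ni] at hrow
  rw [mul_assoc, ← hrow, mul_assoc, mul_inv_cancel_left₀ (d.T_ne_zero d.o)]

theorem exists_ni_o_eq_and_gauss'_eq :
    ∃ c : K, d.ni d.o = c * d.gauss ∧ d.gauss' = c * (d.n * d.ni d.o) := by
  obtain ⟨c, hc⟩ := d.exists_ni_mul_T_inv_eq
  refine ⟨c * d.T d.o, ?_, ?_⟩
  · have hsum : ∑ k, d.ni k * d.T k * d.S k d.o = d.gauss :=
      sum_congr rfl fun k _ ↦ by rw [← ni]; ring
    have ho := hc d.o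
    rw [hsum, mul_inv_eq_iff_eq_mul₀ (d.T_ne_zero d.o)] at ho
    rw [ho, mul_right_comm]
  · calc
      d.gauss' = ∑ j, d.ni j * (d.T j)⁻¹ * d.ni j := sum_congr rfl fun j _ ↦ by ring
      _ = c * ∑ k, d.ni k * d.T k * ∑ j, d.S k j * d.ni j := by
        simp only [hc, mul_assoc, sum_mul, mul_sum]
        exact sum_comm
      _ = c * d.T d.o * (d.n * d.ni d.o) := by
        simp only [sum_S_mul_ni, mul_ite, mul_zero, sum_ite_eq', mem_univ, if_true]
        ring

theorem gauss_mul_gauss' : d.gauss * d.gauss' = d.n * d.ni d.o ^ 2 := by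
  obtain ⟨c, ho, hg'⟩ := d.exists_ni_o_eq_and_gauss'_eq
  linear_combination d.gauss * hg' - d.n * d.ni d.o * ho

theorem gauss_ne_zero : d.gauss ≠ 0 := by
  obtain ⟨c, ho, -⟩ := d.exists_ni_o_eq_and_gauss'_eq
  have hno : d.ni d.o ≠ 0 := d.S_io_ne d.o
  exact right_ne_zero_of_mul (ho ▸ hno)

theorem exists_rat_gauss_mul_gauss'_eq (hdim : ∀ i, ∃ r : ℚ, d.ni i ^ 2 = r) :
    ∃ r : ℚ, d.gauss * d.gauss' = r := by
  choose r hr using hdim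
  refine ⟨(∑ i, r i) * r d.o, ?_⟩
  simp only [d.gauss_mul_gauss', d.n_eq_sum_ni_sq, hr, Rat.cast_mul, Rat.cast_sum]

theorem exists_rat_gauss_sq_eq (hdim : ∀ i, ∃ r : ℚ, d.ni i ^ 2 = r)
    (h : d.gauss' = d.gauss ∨ d.gauss' = -d.gauss) : ∃ r : ℚ, d.gauss ^ 2 = r := by
  obtain ⟨r, hr⟩ := d.exists_rat_gauss_mul_gauss'_eq hdim
  rcases h with h | h
  · exact ⟨r, by rw [← hr, h, sq]⟩
  · exact ⟨-r, by rw [Rat.cast_neg, ← hr, h]; ring⟩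

end ModularRelation

section Periodicity

variable {N : ℕ}

theorem gaussTw_one : d.gaussTw 1 = d.gauss := by
  simp only [gaussTw, gauss, pow_one]

theorem gaussTw_congr (hT : ∀ i, d.T i ^ N = 1) {q r : ℕ} (h : q ≡ r [MOD N]) :
    d.gaussTw q = d.gaussTw r := by
  have hpow (i : I) : d.T i ^ q = d.T i ^ r :=
    pow_eq_pow_of_modEq h (hT i)
  simp only [gaussTw, hpow]

theorem gaussTw_exponent_sub_one [NeZero N] (hT : ∀ i, d.T i ^ N = 1) :
    d.gaussTw (N - 1) = d.gauss' := by
  have hpow (i : I) : d.T i ^ (N - 1) = (d.T i)⁻¹ :=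
    eq_inv_of_mul_eq_one_left (by rw [pow_sub_one_mul (NeZero.ne N), hT])
  simp only [gaussTw, gauss', hpow]

theorem gauss'_eq_or_eq_neg_of_fsym_mul [NeZero N] (hT : ∀ i, d.T i ^ N = 1)
    (h : ∀ q q' : ℕ, q.Coprime N → q'.Coprime N → d.fsym (q * q') = d.fsym q * d.fsym q') :
    d.gauss' = d.gauss ∨ d.gauss' = -d.gauss := by
  have hg := d.gauss_ne_zero
  have hN : 1 ≤ N := NeZero.one_le
  have hcop : (N - 1).Coprime N := (Nat.coprime_self_sub_left hN).2 (Nat.coprime_one_left N)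
  have hmod : (N - 1) * (N - 1) ≡ 1 [MOD N] := by
    rw [← ZMod.natCast_eq_natCast_iff]
    simp [Nat.cast_sub hN]
  have hf := h _ _ hcop hcop
  simp only [fsym, d.gaussTw_congr hT hmod, gaussTw_one, d.gaussTw_exponent_sub_one hT,
    div_self hg] at hf
  field_simp at hf
  exact sq_eq_sq_iff_eq_or_eq_neg.1 hf.symm

end Periodicity

section Galois

variable {N : ℕ} (hdim : ∀ i, ∃ r : ℚ, d.ni i ^ 2 = r) (hT : ∀ i, d.T i ^ N = 1)

include hdim hT

theorem gaussTw_mem_cyclotomicSubalgebra (r : ℕ) : d.gaussTw r ∈ cyclotomicSubalgebra K N := by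
  refine sum_mem fun i _ ↦
    mul_mem ?_ (pow_mem (mem_cyclotomicSubalgebra_of_pow_eq_one (hT i)) r)
  obtain ⟨c, hc⟩ := hdim i
  exact hc ▸ algebraMap_mem _ c

variable [NeZero N] {q : ℕ} (hq : q.Coprime N)

include hq

theorem exists_algEquiv_coe_apply_gaussTw :
    ∃ σ : cyclotomicSubalgebra K N ≃ₐ[ℚ] cyclotomicSubalgebra K N, ∀ r,
      (σ ⟨d.gaussTw r, d.gaussTw_mem_cyclotomicSubalgebra hdim hT r⟩ : K) = d.gaussTw (q * r) := by
  obtain ⟨σ, hσ⟩ := exists_algEquiv_cyclotomicSubalgebra_apply_eq_pow K hq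
  refine ⟨σ, fun r ↦ ?_⟩
  obtain ⟨c, hc⟩ := Classical.skolem.1 hdim
  let t (i : I) : cyclotomicSubalgebra K N := ⟨d.T i, mem_cyclotomicSubalgebra_of_pow_eq_one (hT i)⟩
  have ht (i : I) : σ (t i) = t i ^ q := hσ _ (Subtype.ext (hT i))
  have hsum : (⟨d.gaussTw r, d.gaussTw_mem_cyclotomicSubalgebra hdim hT r⟩ :
      cyclotomicSubalgebra K N) = ∑ i, c i • t i ^ r :=
    Subtype.ext (by simp [gaussTw, hc, t, Algebra.smul_def])
  simp only [hsum, map_sum, map_smul, map_pow, ht]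
  simp [gaussTw, hc, t, Algebra.smul_def, pow_mul]

theorem gaussTw_ne_zero : d.gaussTw q ≠ 0 := by
  obtain ⟨σ, hσ⟩ := d.exists_algEquiv_coe_apply_gaussTw hdim hT hq
  rw [← mul_one q, ← hσ 1, ne_eq, ZeroMemClass.coe_eq_zero, map_eq_zero_iff σ σ.injective]
  exact fun h ↦ d.gauss_ne_zero (d.gaussTw_one ▸ congrArg Subtype.val h)

theorem gaussTw_mul_sq_eq {r : ℕ} {c : ℚ} (h : d.gaussTw r ^ 2 = c) :
    d.gaussTw (q * r) ^ 2 = c := by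
  obtain ⟨σ, hσ⟩ := d.exists_algEquiv_coe_apply_gaussTw hdim hT hq
  set γ : cyclotomicSubalgebra K N := ⟨d.gaussTw r, _⟩
  have hγ : γ ^ 2 = algebraMap ℚ _ c := Subtype.ext h
  rw [← hσ, ← SubmonoidClass.coe_pow, ← map_pow, hγ, σ.commutes]
  rfl

theorem gaussTw_mul_eq {r s : ℕ} {c : ℚ} (h : d.gaussTw r = c * d.gaussTw s) :
    d.gaussTw (q * r) = c * d.gaussTw (q * s) := by
  obtain ⟨σ, hσ⟩ := d.exists_algEquiv_coe_apply_gaussTw hdim hT hq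
  have hγ : (⟨d.gaussTw r, d.gaussTw_mem_cyclotomicSubalgebra hdim hT r⟩ :
      cyclotomicSubalgebra K N) =
        c • ⟨d.gaussTw s, d.gaussTw_mem_cyclotomicSubalgebra hdim hT s⟩ :=
    Subtype.ext (by simp [h, Algebra.smul_def])
  rw [← hσ r, ← hσ s, hγ, map_smul]
  simp [Algebra.smul_def]

theorem fsym_mul_eq_fsym_mul_gaussTw_div (q' : ℕ) :
    d.fsym (q * q') = d.fsym q * (d.gaussTw (q * q') / d.gaussTw q) := by
  rw [fsym, fsym, mul_comm (_ / _), div_mul_div_cancel₀ (d.gaussTw_ne_zero hdim hT hq)]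

theorem fsym_eq_one_or_eq_neg_one (h : d.gauss' = d.gauss ∨ d.gauss' = -d.gauss) :
    d.fsym q = 1 ∨ d.fsym q = -1 := by
  obtain ⟨c, hc⟩ := d.exists_rat_gauss_sq_eq hdim h
  have hsq : d.gaussTw q ^ 2 = d.gauss ^ 2 := by
    rw [hc, ← mul_one q]
    exact d.gaussTw_mul_sq_eq hdim hT hq (by rw [gaussTw_one, hc])
  rw [fsym, div_eq_iff d.gauss_ne_zero, div_eq_iff d.gauss_ne_zero, one_mul, neg_one_mul]
  exact sq_eq_sq_iff_eq_or_eq_neg.1 hsq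

theorem fsym_mul_of_fsym_eq {q' : ℕ} {c : ℚ} (h : d.fsym q' = c) :
    d.fsym (q * q') = d.fsym q * d.fsym q' := by
  have hq' : d.gaussTw q' = c * d.gaussTw 1 := by
    rw [gaussTw_one, ← div_eq_iff d.gauss_ne_zero, ← h, fsym]
  rw [h, fsym, fsym, d.gaussTw_mul_eq hdim hT hq hq', mul_one]
  ring

end Galois

theorem fusion_symbol_character_general (hdim : ∀ i, ∃ r : ℚ, d.ni i ^ 2 = r)
    (N : ℕ) (hN : 0 < N) (hT : ∀ i, d.T i ^ N = 1) :
    (∀ q q' : ℕ, Nat.Coprime q N → Nat.Coprime q' N →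
        d.fsym (q * q') = d.fsym q * (d.gaussTw (q * q') / d.gaussTw q)) ∧
    ((∀ q q' : ℕ, Nat.Coprime q N → Nat.Coprime q' N →
        d.fsym (q * q') = d.fsym q * d.fsym q') ↔
      (d.gauss' = d.gauss ∨ d.gauss' = -d.gauss)) ∧
    ((d.gauss' = d.gauss ∨ d.gauss' = -d.gauss) →
      ∀ q : ℕ, Nat.Coprime q N → d.fsym q = 1 ∨ d.fsym q = -1) := by
  have : NeZero N := ⟨hN.ne'⟩
  refine ⟨fun q q' hq _ ↦ d.fsym_mul_eq_fsym_mul_gaussTw_div hdim hT hq q',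
    ⟨d.gauss'_eq_or_eq_neg_of_fsym_mul hT, fun h q q' hq hq' ↦ ?_⟩,
    fun h q hq ↦ d.fsym_eq_one_or_eq_neg_one hdim hT hq h⟩
  rcases d.fsym_eq_one_or_eq_neg_one hdim hT hq' h with hf | hf
  · exact d.fsym_mul_of_fsym_eq hdim hT hq (c := 1) (by simpa using hf)
  · exact d.fsym_mul_of_fsym_eq hdim hT hq (c := -1) (by simpa using hf)

end ModularDatum

/-- For an integral modular datum with exponent `N`, the fusion symbol satisfies the
1-cocycle identity `f(qq') = f(q)·σ_q(f(q'))` (where `σ_q(f(q')) = σ_{qq'}(g)/σ_q(g)`),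
and `f` is a Dirichlet character (multiplicative) if and only if `g' = ±g`; in that case
`f(q) ∈ {1, -1}` for all `q` coprime to `N`. -/
theorem ModularDatum.fusion_symbol_character {K : Type*} [Field K] [CharZero K]
    {I : Type*} [Fintype I] [DecidableEq I] (d : ModularDatum K I)
    (hint : ∀ i, ∃ m : ℕ, 0 < m ∧ d.ni i = (m : K))
    (N : ℕ) (hN : 0 < N) (hT : ∀ i, d.T i ^ N = 1) :
    (∀ q q' : ℕ, Nat.Coprime q N → Nat.Coprime q' N →
        d.fsym (q * q') = d.fsym q * (d.gaussTw (q * q') / d.gaussTw q)) ∧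
    ((∀ q q' : ℕ, Nat.Coprime q N → Nat.Coprime q' N →
        d.fsym (q * q') = d.fsym q * d.fsym q') ↔
      (d.gauss' = d.gauss ∨ d.gauss' = -d.gauss)) ∧
    ((d.gauss' = d.gauss ∨ d.gauss' = -d.gauss) →
      ∀ q : ℕ, Nat.Coprime q N → d.fsym q = 1 ∨ d.fsym q = -1) := by
  refine d.fusion_symbol_character_general (fun i ↦ ?_) N hN hT
  obtain ⟨m, -, hm⟩ := hint i
  exact ⟨m ^ 2, by simp [hm]⟩
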